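/- For every real a ≥ 0, the integral ∫₀¹ (1−2r)/√((1−r)·(1 + a·r^{−3/2})) dr is less than or equal to 0. -/

import Mathlib

open Real intervalIntegral

/-- `σ⁺(γ,x) = 2 − γ²x + √((2−γ²x)² + 4(γ+1)²)`. -/
noncomputable def sigmaPlus (γ x : ℝ) : ℝ :=
  2 - γ ^ 2 * x + Real.sqrt ((2 - γ ^ 2 * x) ^ 2 + 4 * (γ + 1) ^ 2)

/-- `σ⁻(γ,x) = 2 − γ²x − √((2−γ²x)² + 4(γ+1)²)`. -/
noncomputable def sigmaMinus (γ x : ℝ) : ℝ :=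
  2 - γ ^ 2 * x - Real.sqrt ((2 - γ ^ 2 * x) ^ 2 + 4 * (γ + 1) ^ 2)

/-- `F(γ,x) = σ⁺(γ,x) · (∫₀¹ r^{3/2}/√((1−r)(σ⁺ r − σ⁻)) dr) /
    (∫₀¹ r^{1/2}/√((1−r)(σ⁺ r − σ⁻)) dr)`. -/
noncomputable def F (γ x : ℝ) : ℝ :=
  sigmaPlus γ x *
    (∫ r in (0:ℝ)..1, r ^ ((3:ℝ)/2) /
      Real.sqrt ((1 - r) * (sigmaPlus γ x * r - sigmaMinus γ x))) /
    (∫ r in (0:ℝ)..1, r ^ ((1:ℝ)/2) /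
      Real.sqrt ((1 - r) * (sigmaPlus γ x * r - sigmaMinus γ x)))

/-- The lemniscatic constant `ϖ = 2∫₀¹ dt/√(1−t⁴)`. -/
noncomputable def varpi : ℝ := 2 * ∫ t in (0:ℝ)..1, 1 / Real.sqrt (1 - t ^ 4)

theorem aux_int : IntervalIntegrable (fun r : ℝ => (1 - 2 * r) / Real.sqrt (1 - r))
    MeasureTheory.volume 0 1 := by
  have h1 : IntervalIntegrable (fun x : ℝ => x ^ (-(1:ℝ)/2)) MeasureTheory.volume 1 0 :=
    intervalIntegral.intervalIntegrable_rpow' (by norm_num)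
  have h2 := h1.comp_sub_left 1
  simp only [sub_self, sub_zero] at h2
  have h3 := h2.continuousOn_mul (g := fun r : ℝ => 1 - 2 * r) (by fun_prop)
  refine h3.congr_ae ?_
  rw [Set.uIoc_of_le zero_le_one]
  refine (MeasureTheory.ae_restrict_iff' measurableSet_Ioc).2 (Filter.Eventually.of_forall ?_)
  intro r hr
  have : (0:ℝ) ≤ 1 - r := by linarith [hr.2]
  simp only []
  rw [show (-(1:ℝ)/2) = -(1/2) by norm_num, Real.rpow_neg this, ← Real.sqrt_eq_rpow, div_eq_mul_inv]

theorem aux_val : (∫ r in (0:ℝ)..1, (1 - 2 * r) / Real.sqrt (1 - r)) = -(2/3) := by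
  rw [intervalIntegral.integral_eq_sub_of_hasDerivAt_of_le (a := 0) (b := 1) zero_le_one
    (f := fun r => -(4/3) * Real.sqrt (1 - r) ^ 3 + 2 * Real.sqrt (1 - r)) (by fun_prop) ?_ aux_int]
  · norm_num
  · intro r hr
    have h0 : 0 < 1 - r := by linarith [hr.2]
    have hs : 0 < Real.sqrt (1 - r) := Real.sqrt_pos.2 h0
    have hd := ((hasDerivAt_id r).const_sub 1).sqrt h0.ne'
    have := ((hd.pow 3).const_mul (-(4/3))).add (hd.const_mul 2)
    refine this.congr_deriv ?_
    have hq := Real.sq_sqrt h0.le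
    simp only [id]
    field_simp
    norm_num
    linarith

/-- For every `a ≥ 0`, `∫₀¹ (1−2r)/√((1−r)(1 + a·r^{−3/2})) dr ≤ 0`. -/
theorem statement_15 (a : ℝ) (ha : 0 ≤ a) :
    (∫ r in (0:ℝ)..1, (1 - 2 * r) /
      Real.sqrt ((1 - r) * (1 + a * r ^ (-(3:ℝ)/2)))) ≤ 0 := by
  by_cases hi : IntervalIntegrable (fun r : ℝ => (1 - 2 * r) /
      Real.sqrt ((1 - r) * (1 + a * r ^ (-(3:ℝ)/2)))) MeasureTheory.volume 0 1
  swap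
  · rw [intervalIntegral.integral_undef hi]
  have hb : 0 < 1 + a * (1/2:ℝ) ^ (-(3:ℝ)/2) := by positivity
  have key := intervalIntegral.integral_mono_on_of_le_Ioo (zero_le_one) hi
    (aux_int.mul_const (Real.sqrt (1 + a * (1/2:ℝ) ^ (-(3:ℝ)/2)))⁻¹) ?_
  · rw [intervalIntegral.integral_mul_const, aux_val] at key
    refine key.trans ?_
    have : 0 ≤ (Real.sqrt (1 + a * (1/2:ℝ) ^ (-(3:ℝ)/2)))⁻¹ := by positivity
    linarith
  · intro r hr
    have h0 : 0 < 1 - r := by linarith [hr.2]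
    have hr0 : 0 < r := hr.1
    have hp : 0 < 1 + a * r ^ (-(3:ℝ)/2) := by positivity
    rw [Real.sqrt_mul h0.le, ← div_div, div_eq_mul_inv _ (Real.sqrt (1 + _))]
    have hs : 0 < Real.sqrt (1 - r) := Real.sqrt_pos.2 h0
    have hs1 := Real.sqrt_pos.2 hp
    have hs2 := Real.sqrt_pos.2 hb
    rcases le_total r (1/2) with h | h
    · have hm : (1/2:ℝ) ^ (-(3:ℝ)/2) ≤ r ^ (-(3:ℝ)/2) :=
        Real.rpow_le_rpow_of_nonpos hr0 h (by norm_num)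
      refine mul_le_mul_of_nonneg_left ?_ (div_nonneg (by linarith) hs.le)
      gcongr
    · have hm : r ^ (-(3:ℝ)/2) ≤ (1/2:ℝ) ^ (-(3:ℝ)/2) :=
        Real.rpow_le_rpow_of_nonpos (by norm_num) h (by norm_num)
      refine mul_le_mul_of_nonpos_left ?_ (div_nonpos_of_nonpos_of_nonneg (by linarith) hs.le)
      gcongr
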